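/- arXiv:1008.3514 — 3 statements merged into one kernel-verified Lean document; each statement's English description precedes it below -/
import Mathlib

section
/- (Gibbs tail bound.) Let U satisfy Assumption 1 and let μ be the associated Gibbs measure. Then there exists a constant E_c > 0 such that μ({x ∈ ℝ^n : U(x) ≥ E}) ≤ exp(−βE/2) for all E > E_c. -/
/-!
The Gibbs measure is Lebesgue measure exponentially tilted by `-β U`, so the exponential moment of
`U` of order `t < β` is, up to normalization, the integral of `exp (-(β - t) U)`. This is finite:
on a sublevel set of `U` the integrand is at most a multiple of `exp (-β U)`, and on the
complement the growth of `U` makes it at most a Gaussian. The Chernoff bound gives decay of order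
`exp (-t E)`, and the excess over a rate `s < t` absorbs the constant for large `E`.
When `exp (-β U)` is not integrable, the junk value `0` of its integral makes the Gibbs measure `0`.
-/

open MeasureTheory Real Filter
open scoped ENNReal

noncomputable section

abbrev Euc (n : ℕ) := EuclideanSpace ℝ (Fin n)

/-- Second derivative of `U` at `x` as a bilinear form. -/
def D2 {n : ℕ} (U : Euc n → ℝ) (x v w : Euc n) : ℝ :=
  iteratedFDeriv ℝ 2 U x ![v, w]

/-- Laplacian of `U` at `x`. -/
def lapl {n : ℕ} (U : Euc n → ℝ) (x : Euc n) : ℝ :=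
  ∑ i, D2 U x (EuclideanSpace.single i 1) (EuclideanSpace.single i 1)

/-- Assumption 1 on the potential `U`. -/
structure Assumption1 (n : ℕ) (β : ℝ) (U : Euc n → ℝ) where
  smooth : ContDiff ℝ 4 U
  c : ℝ
  d : ℝ
  EB : ℝ
  c_pos : 0 < c
  c_lt : c < β
  d_pos : 0 < d
  one_le : ∀ x, 1 ≤ U x
  quad_growth : ∀ C > (0:ℝ), ∃ E > (0:ℝ), ∀ x, U x > E → C * (1 + ‖x‖ ^ 2) ≤ U x
  driftB : ∀ x, U x > EB → lapl U x ≤ c * ‖gradient U x‖ ^ 2 - d * U x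
  hess_lb : ∃ C : ℝ, 0 ≤ C ∧ ∀ x η : Euc n, -C * ‖η‖ ^ 2 ≤ D2 U x η η
  deriv_bound : ∃ C > (0:ℝ), ∀ x,
    ‖iteratedFDeriv ℝ 4 U x‖ ⊔ ‖iteratedFDeriv ℝ 3 U x‖ ⊔ ‖iteratedFDeriv ℝ 2 U x‖ ⊔
      ‖gradient U x‖ ≤ C * U x

/-- The Gibbs measure with density `Z⁻¹ exp(-β U x)`. -/
def gibbs (n : ℕ) (β : ℝ) (U : Euc n → ℝ) : Measure (Euc n) :=
  volume.withDensity fun x => ENNReal.ofReal (exp (-β * U x) / ∫ y, exp (-β * U y))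

/-- Total variation distance, `‖μ - ν‖_TV = 2 sup_A |μ(A) - ν(A)|`. -/
def tvDist {α : Type*} [MeasurableSpace α] (μ ν : Measure α) : ℝ :=
  2 * ⨆ A : {A : Set α // MeasurableSet A}, |(μ A.1).toReal - (ν A.1).toReal|

/-- Forward Euler transition density `q_h(x,y)`. -/
def eulerDensity (n : ℕ) (β h : ℝ) (U : Euc n → ℝ) (x y : Euc n) : ℝ :=
  (4 * π * β⁻¹ * h) ^ (-(n : ℝ) / 2) *
    exp (-‖y - x + h • gradient U x‖ ^ 2 / (4 * β⁻¹ * h))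

/-- MALA acceptance probability `α_h(x,y)`. -/
def accept (n : ℕ) (β h : ℝ) (U : Euc n → ℝ) (x y : Euc n) : ℝ :=
  min 1 ((eulerDensity n β h U y x * exp (-β * U y)) /
         (eulerDensity n β h U x y * exp (-β * U x)))

/-- One-step MALA transition kernel. -/
def malaKernel (n : ℕ) (β h : ℝ) (U : Euc n → ℝ) (x : Euc n) : Measure (Euc n) :=
  volume.withDensity (fun y => ENNReal.ofReal (accept n β h U x y * eulerDensity n β h U x y))
  + (1 - ∫⁻ y, ENNReal.ofReal (accept n β h U x y * eulerDensity n β h U x y)) • Measure.dirac x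

/-- `k`-step iterate of a transition kernel. -/
def iterKernel {α : Type*} [MeasurableSpace α] (κ : α → Measure α) : ℕ → α → Measure α
  | 0, x => Measure.dirac x
  | k + 1, x => (iterKernel κ k x).bind κ

/-- The level set `R_h = {x : U(x) < E_⋆ h^{-1/4}}`. -/
def Rset (n : ℕ) (h Estar : ℝ) (U : Euc n → ℝ) : Set (Euc n) :=
  {x | U x < Estar * h ^ (-(1:ℝ) / 4)}

open scoped Classical in
/-- Patched MALA acceptance probability. -/
def acceptBar (n : ℕ) (β h Estar : ℝ) (U : Euc n → ℝ) (x y : Euc n) : ℝ :=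
  if x ∈ Rset n h Estar U ∧ y ∈ Rset n h Estar U then accept n β h U x y else 0

/-- One-step patched MALA transition kernel. -/
def patchedKernel (n : ℕ) (β h Estar : ℝ) (U : Euc n → ℝ) (x : Euc n) : Measure (Euc n) :=
  volume.withDensity
    (fun y => ENNReal.ofReal (acceptBar n β h Estar U x y * eulerDensity n β h U x y))
  + (1 - ∫⁻ y, ENNReal.ofReal (acceptBar n β h Estar U x y * eulerDensity n β h U x y)) •
      Measure.dirac x

/-- Standard Gaussian measure `N(0, I)` on `ℝ^n`. -/
def stdGaussian (n : ℕ) : Measure (Euc n) :=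
  volume.withDensity fun ξ => ENNReal.ofReal ((2 * π) ^ (-(n : ℝ) / 2) * exp (-‖ξ‖ ^ 2 / 2))

/-- Forward Euler transition kernel. -/
def eulerKernel (n : ℕ) (β h : ℝ) (U : Euc n → ℝ) (x : Euc n) : Measure (Euc n) :=
  volume.withDensity fun y => ENNReal.ofReal (eulerDensity n β h U x y)

section Chernoff

variable {α : Type*} {mα : MeasurableSpace α} {μ : Measure α} [IsFiniteMeasure μ]
  {X : α → ℝ} {s t : ℝ}

lemma eventually_measure_ge_le_exp (ht : 0 ≤ t) (hst : s < t)
    (hX : Integrable (fun ω => exp (t * X ω)) μ) :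
    ∀ᶠ E in atTop, μ {ω | E ≤ X ω} ≤ ENNReal.ofReal (exp (-s * E)) := by
  have excess_absorbs_mgf : ∀ᶠ E in atTop, ProbabilityTheory.mgf X μ t ≤ exp ((t - s) * E) :=
    (tendsto_exp_atTop.comp
      (tendsto_id.const_mul_atTop (sub_pos.2 hst))).eventually_ge_atTop _
  filter_upwards [excess_absorbs_mgf] with E hE
  rw [ENNReal.le_ofReal_iff_toReal_le (measure_ne_top μ _) (exp_pos _).le]
  calc μ.real {ω | E ≤ X ω}
      ≤ exp (-t * E) * ProbabilityTheory.mgf X μ t :=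
        ProbabilityTheory.measure_ge_le_exp_mul_mgf E ht hX
    _ ≤ exp (-t * E) * exp ((t - s) * E) := by gcongr
    _ = exp (-s * E) := by rw [← exp_add]; ring_nf

end Chernoff

section TiltedMoments

variable {α : Type*} {mα : MeasurableSpace α} {ν : Measure α} {U g : α → ℝ} {β b t E₀ : ℝ}

lemma integrable_exp_neg_mul_of_le_on_superlevel (hU : AEMeasurable U ν) (hb : 0 ≤ b) (hbβ : b ≤ β)
    (hUβ : Integrable (fun x => exp (-β * U x)) ν) (hg : Integrable (fun x => exp (-b * g x)) ν)
    (hgU : ∀ x, E₀ < U x → g x ≤ U x) :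
    Integrable (fun x => exp (-b * U x)) ν := by
  refine ((hUβ.const_mul (exp ((β - b) * E₀))).add hg).mono' (by fun_prop) (ae_of_all _ fun x => ?_)
  rw [norm_of_nonneg (exp_pos _).le, Pi.add_apply]
  rcases le_or_gt (U x) E₀ with hx | hx
  · calc exp (-b * U x) = exp ((β - b) * U x) * exp (-β * U x) := by rw [← exp_add]; ring_nf
      _ ≤ exp ((β - b) * E₀) * exp (-β * U x) := by
        have := sub_nonneg.2 hbβ
        gcongr
      _ ≤ _ := le_add_of_nonneg_right (exp_pos _).le
  · calc exp (-b * U x) ≤ exp (-b * g x) :=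
        exp_le_exp.2 (mul_le_mul_of_nonpos_left (hgU x hx) (neg_nonpos.2 hb))
      _ ≤ _ := le_add_of_nonneg_left (by positivity)

lemma integrable_exp_mul_tilted_of_le_on_superlevel (hU : AEMeasurable U ν) (ht : 0 ≤ t)
    (htβ : t ≤ β) (hg : Integrable (fun x => exp (-(β - t) * g x)) ν)
    (hgU : ∀ x, E₀ < U x → g x ≤ U x) :
    Integrable (fun x => exp (t * U x)) (ν.tilted fun x => -β * U x) := by
  by_cases hUβ : Integrable (fun x => exp (-β * U x)) ν
  · have hmoment := integrable_exp_neg_mul_of_le_on_superlevel hU (sub_nonneg.2 htβ)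
      (sub_le_self β ht) hUβ hg hgU
    rw [integrable_tilted_iff hUβ]
    convert hmoment using 2 with x
    rw [smul_eq_mul, ← exp_add]
    ring_nf
  · rw [tilted_of_not_integrable hUβ]
    exact integrable_zero_measure

end TiltedMoments

section InnerProductSpace

variable {V : Type*} [NormedAddCommGroup V] [InnerProductSpace ℝ V] [FiniteDimensional ℝ V]
  [MeasurableSpace V] [BorelSpace V]

lemma integrable_exp_neg_mul_sq_norm {b : ℝ} (hb : 0 < b) :
    Integrable (fun x : V => exp (-b * ‖x‖ ^ 2)) := by
  refine .of_integral_ne_zero ?_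
  rw [GaussianFourier.integral_rexp_neg_mul_sq_norm hb]
  positivity

theorem gibbs_tail_bound_general {U : V → ℝ} (hU : AEMeasurable U) {β s a E₀ : ℝ} (hβ : 0 < β)
    (hs : s < β) (ha : 0 < a) (hgrowth : ∀ x, E₀ < U x → a * ‖x‖ ^ 2 ≤ U x) :
    ∃ Ec > (0:ℝ), ∀ E : ℝ, E > Ec →
      (volume.tilted fun x => -β * U x) {x | E ≤ U x} ≤ ENNReal.ofReal (exp (-s * E)) := by
  obtain ⟨t, hmax, htβ⟩ := exists_between (max_lt hs hβ)
  obtain ⟨hst, ht⟩ := max_lt_iff.1 hmax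
  have hgauss : Integrable fun x : V => exp (-(β - t) * (a * ‖x‖ ^ 2)) := by
    simpa only [neg_mul, mul_assoc] using
      integrable_exp_neg_mul_sq_norm (V := V) (mul_pos (sub_pos.2 htβ) ha)
  have hmoment := integrable_exp_mul_tilted_of_le_on_superlevel hU ht.le htβ.le hgauss hgrowth
  exact (atTop_basis_Ioi' 0).eventually_iff.1 (eventually_measure_ge_le_exp ht.le hst hmoment)

end InnerProductSpace

lemma gibbs_eq_tilted (n : ℕ) (β : ℝ) (U : Euc n → ℝ) :
    gibbs n β U = volume.tilted fun x => -β * U x :=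
  rfl

/-- Gibbs tail bound. -/
theorem gibbs_tail_bound (n : ℕ) (β : ℝ) (hβ : 0 < β)
    (U : Euc n → ℝ) (hU : Assumption1 n β U) :
    ∃ Ec > (0:ℝ), ∀ E : ℝ, E > Ec →
      gibbs n β U {x | E ≤ U x} ≤ ENNReal.ofReal (exp (-β * E / 2)) := by
  obtain ⟨E₀, -, hquad⟩ := hU.quad_growth 1 one_pos
  simpa only [gibbs_eq_tilted, neg_mul, div_mul_eq_mul_div, neg_div] using
    gibbs_tail_bound_general hU.smooth.continuous.aemeasurable hβ (half_lt_self hβ) one_pos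
      fun x hx => by linarith [hquad x hx]

end
end

section
/- (Local Lipschitz continuity of the forward Euler kernel in total variation.) Let U : ℝ^n → ℝ be C¹. For every stepsize h > 0 and all x, y ∈ ℝ^n, the forward Euler transition kernels satisfy ‖P̃_h(x,·) − P̃_h(y,·)‖_TV ≤ |x − y| / √(2β⁻¹h) + √(h/(2β⁻¹))·|∇U(x) − ∇U(y)|. -/
open MeasureTheory Real Filter
open scoped ENNReal

noncomputable section

/-!
Both kernels are Gaussians with covariance `v • id`, `v = 2β⁻¹h`, whose means `a`, `b` differ by at
most `|x - y| + h |∇U(x) - ∇U(y)|`. Factoring `f - g = (√f - √g)(√f + √g)`, Cauchy–Schwarz bounds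
the total variation distance of two probability densities by `2√(1 - (∫ √(f g))²)`. For the two
Gaussians the parallelogram law makes `√(f g)` a multiple of the Gaussian density centred at the
midpoint, so `∫ √(f g) = exp(-|a - b|²/(8v))`, and `1 - e⁻ˢ ≤ s` gives the bound `|a - b|/√v`.
-/

section TotalVariation

variable {α : Type*} [MeasurableSpace α] {μ : Measure α} {f g : α → ℝ}

theorem sq_integral_abs_mul_le (hf : MemLp f 2 μ) (hg : MemLp g 2 μ) :
    (∫ x, |f x * g x| ∂μ) ^ 2 ≤ (∫ x, f x ^ 2 ∂μ) * ∫ x, g x ^ 2 ∂μ := by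
  have holder : ∫ x, |f x * g x| ∂μ ≤ √(∫ x, f x ^ 2 ∂μ) * √(∫ x, g x ^ 2 ∂μ) := by
    simpa [abs_mul, Real.sqrt_eq_rpow] using
      integral_mul_norm_le_Lp_mul_Lq (μ := μ) (f := f) (g := g) .two_two
        (by simpa using hf) (by simpa using hg)
  calc (∫ x, |f x * g x| ∂μ) ^ 2
      ≤ (√(∫ x, f x ^ 2 ∂μ) * √(∫ x, g x ^ 2 ∂μ)) ^ 2 :=
        pow_le_pow_left₀ (integral_nonneg fun _ ↦ abs_nonneg _) holder 2
    _ = (∫ x, f x ^ 2 ∂μ) * ∫ x, g x ^ 2 ∂μ := by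
        rw [mul_pow, Real.sq_sqrt (integral_nonneg fun _ ↦ sq_nonneg _),
          Real.sq_sqrt (integral_nonneg fun _ ↦ sq_nonneg _)]

theorem integral_add_sq (hf : MemLp f 2 μ) (hg : MemLp g 2 μ) :
    ∫ x, (f x + g x) ^ 2 ∂μ
      = ∫ x, f x ^ 2 ∂μ + ∫ x, g x ^ 2 ∂μ + 2 * ∫ x, f x * g x ∂μ := by
  have hsq : Integrable (fun x ↦ f x ^ 2 + g x ^ 2) μ := hf.integrable_sq.add hg.integrable_sq
  have hfg : Integrable (fun x ↦ f x * g x) μ := hf.integrable_mul hg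
  have hexpand (x : α) : (f x + g x) ^ 2 = f x ^ 2 + g x ^ 2 + 2 * (f x * g x) := by ring
  simp only [hexpand]
  rw [integral_add hsq (hfg.const_mul 2), integral_add hf.integrable_sq hg.integrable_sq,
    integral_const_mul]

theorem integral_sub_sq (hf : MemLp f 2 μ) (hg : MemLp g 2 μ) :
    ∫ x, (f x - g x) ^ 2 ∂μ
      = ∫ x, f x ^ 2 ∂μ + ∫ x, g x ^ 2 ∂μ - 2 * ∫ x, f x * g x ∂μ := by
  simpa [← sub_eq_add_neg, integral_neg] using integral_add_sq hf hg.neg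

theorem sq_integral_abs_sq_sub_sq_le (hf : MemLp f 2 μ) (hg : MemLp g 2 μ) :
    (∫ x, |f x ^ 2 - g x ^ 2| ∂μ) ^ 2
      ≤ (∫ x, f x ^ 2 ∂μ + ∫ x, g x ^ 2 ∂μ) ^ 2 - 4 * (∫ x, f x * g x ∂μ) ^ 2 := by
  calc (∫ x, |f x ^ 2 - g x ^ 2| ∂μ) ^ 2
      = (∫ x, |(f x + g x) * (f x - g x)| ∂μ) ^ 2 := by simp only [sq_sub_sq]
    _ ≤ (∫ x, (f x + g x) ^ 2 ∂μ) * ∫ x, (f x - g x) ^ 2 ∂μ :=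
        sq_integral_abs_mul_le (hf.add hg) (hf.sub hg)
    _ = _ := by rw [integral_add_sq hf hg, integral_sub_sq hf hg]; ring

theorem memLp_two_sqrt (hf : Integrable f μ) (hf₀ : 0 ≤ᵐ[μ] f) :
    MemLp (fun x ↦ √(f x)) 2 μ := by
  refine (memLp_two_iff_integrable_sq (continuous_sqrt.comp_aestronglyMeasurable hf.1)).2
    (hf.congr ?_)
  filter_upwards [hf₀] with x hx using (Real.sq_sqrt hx).symm

theorem sq_integral_abs_sub_le (hf : Integrable f μ) (hg : Integrable g μ)
    (hf₀ : 0 ≤ᵐ[μ] f) (hg₀ : 0 ≤ᵐ[μ] g) :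
    (∫ x, |f x - g x| ∂μ) ^ 2
      ≤ (∫ x, f x ∂μ + ∫ x, g x ∂μ) ^ 2 - 4 * (∫ x, √(f x * g x) ∂μ) ^ 2 := by
  have hf_sq : (fun x ↦ √(f x) ^ 2) =ᵐ[μ] f := hf₀.mono fun _ ↦ Real.sq_sqrt
  have hg_sq : (fun x ↦ √(g x) ^ 2) =ᵐ[μ] g := hg₀.mono fun _ ↦ Real.sq_sqrt
  have hfg : (fun x ↦ √(f x) * √(g x)) =ᵐ[μ] fun x ↦ √(f x * g x) :=
    hf₀.mono fun x hx ↦ (Real.sqrt_mul hx (g x)).symm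
  have hsub : (fun x ↦ |√(f x) ^ 2 - √(g x) ^ 2|) =ᵐ[μ] fun x ↦ |f x - g x| := by
    filter_upwards [hf_sq, hg_sq] with x hfx hgx using by rw [hfx, hgx]
  simpa only [integral_congr_ae hf_sq, integral_congr_ae hg_sq, integral_congr_ae hfg,
    integral_congr_ae hsub] using
    sq_integral_abs_sq_sub_sq_le (memLp_two_sqrt hf hf₀) (memLp_two_sqrt hg hg₀)

theorem abs_setIntegral_le_half_integral_abs (hf : Integrable f μ) (hf_int : ∫ x, f x ∂μ = 0)
    {s : Set α} (hs : MeasurableSet s) :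
    |∫ x in s, f x ∂μ| ≤ (∫ x, |f x| ∂μ) / 2 := by
  have hcompl : |∫ x in sᶜ, f x ∂μ| = |∫ x in s, f x ∂μ| := by
    rw [setIntegral_compl hs hf, hf_int, zero_sub, abs_neg]
  linarith [integral_add_compl hs hf.abs,
    abs_integral_le_integral_abs (f := f) (μ := μ.restrict s),
    abs_integral_le_integral_abs (f := f) (μ := μ.restrict sᶜ)]

theorem toReal_withDensity_ofReal_apply (hf : AEStronglyMeasurable f μ) (hf₀ : 0 ≤ᵐ[μ] f)
    {s : Set α} (hs : MeasurableSet s) :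
    (μ.withDensity (fun x ↦ ENNReal.ofReal (f x)) s).toReal = ∫ x in s, f x ∂μ := by
  rw [withDensity_apply _ hs,
    integral_eq_lintegral_of_nonneg_ae (ae_restrict_of_ae hf₀) hf.restrict]

theorem tvDist_le_of_forall_measurableSet {ν₁ ν₂ : Measure α} {c : ℝ}
    (h : ∀ s, MeasurableSet s → |(ν₁ s).toReal - (ν₂ s).toReal| ≤ c / 2) :
    tvDist ν₁ ν₂ ≤ c := by
  have : Nonempty {s : Set α // MeasurableSet s} := ⟨∅, .empty⟩
  have hsup := ciSup_le fun s : {s : Set α // MeasurableSet s} ↦ h s.1 s.2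
  unfold tvDist
  linarith

theorem tvDist_withDensity_le_integral_abs_sub (hf : Integrable f μ) (hg : Integrable g μ)
    (hf₀ : 0 ≤ᵐ[μ] f) (hg₀ : 0 ≤ᵐ[μ] g) (hfg : ∫ x, f x ∂μ = ∫ x, g x ∂μ) :
    tvDist (μ.withDensity fun x ↦ ENNReal.ofReal (f x))
        (μ.withDensity fun x ↦ ENNReal.ofReal (g x))
      ≤ ∫ x, |f x - g x| ∂μ := by
  refine tvDist_le_of_forall_measurableSet fun s hs ↦ ?_
  rw [toReal_withDensity_ofReal_apply hf.1 hf₀ hs, toReal_withDensity_ofReal_apply hg.1 hg₀ hs,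
    ← integral_sub hf.integrableOn hg.integrableOn]
  exact abs_setIntegral_le_half_integral_abs (hf.sub hg)
    (by simp only [Pi.sub_apply, integral_sub hf hg, hfg, sub_self]) hs

theorem tvDist_withDensity_le_two_mul_sqrt (hf₀ : 0 ≤ᵐ[μ] f) (hg₀ : 0 ≤ᵐ[μ] g)
    (hf : ∫ x, f x ∂μ = 1) (hg : ∫ x, g x ∂μ = 1) :
    tvDist (μ.withDensity fun x ↦ ENNReal.ofReal (f x))
        (μ.withDensity fun x ↦ ENNReal.ofReal (g x))
      ≤ 2 * √(1 - (∫ x, √(f x * g x) ∂μ) ^ 2) := by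
  have hfi := integrable_of_integral_eq_one hf
  have hgi := integrable_of_integral_eq_one hg
  have hL1 := sq_integral_abs_sub_le hfi hgi hf₀ hg₀
  rw [hf, hg] at hL1
  calc _ ≤ ∫ x, |f x - g x| ∂μ :=
        tvDist_withDensity_le_integral_abs_sub hfi hgi hf₀ hg₀ (hf.trans hg.symm)
    _ = 2 * ((∫ x, |f x - g x| ∂μ) / 2) := by ring
    _ ≤ 2 * √(1 - (∫ x, √(f x * g x) ∂μ) ^ 2) := by
        gcongr
        exact Real.le_sqrt_of_sq_le (by linarith)

end TotalVariation

section Gaussian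

variable {V : Type*} [NormedAddCommGroup V] [InnerProductSpace ℝ V] {v : ℝ}

/-- Density of the Gaussian measure on `V` with mean `m` and covariance `v • id`, for a variance
`v > 0`. -/
def isotropicGaussianPDF (v : ℝ) (m z : V) : ℝ :=
  (2 * π * v) ^ (-(Module.finrank ℝ V : ℝ) / 2) * exp (-‖z - m‖ ^ 2 / (2 * v))

theorem isotropicGaussianPDF_nonneg (hv : 0 ≤ v) (m z : V) : 0 ≤ isotropicGaussianPDF v m z := by
  unfold isotropicGaussianPDF
  positivity

theorem norm_sub_sq_add_norm_sub_sq_eq_midpoint (a b z : V) :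
    ‖z - a‖ ^ 2 + ‖z - b‖ ^ 2 = 2 * ‖z - midpoint ℝ a b‖ ^ 2 + ‖a - b‖ ^ 2 / 2 := by
  have := EuclideanGeometry.dist_sq_add_dist_sq_eq_two_mul_dist_midpoint_sq_add_half_dist_sq z a b
  simp only [dist_eq_norm] at this
  linarith

theorem sqrt_isotropicGaussianPDF_mul (hv : 0 < v) (a b z : V) :
    √(isotropicGaussianPDF v a z * isotropicGaussianPDF v b z)
      = exp (-‖a - b‖ ^ 2 / (8 * v)) * isotropicGaussianPDF v (midpoint ℝ a b) z := by
  have hexp : exp (-‖z - a‖ ^ 2 / (2 * v)) * exp (-‖z - b‖ ^ 2 / (2 * v))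
      = (exp (-‖a - b‖ ^ 2 / (8 * v)) * exp (-‖z - midpoint ℝ a b‖ ^ 2 / (2 * v))) ^ 2 := by
    rw [← exp_add, ← exp_add, ← exp_nat_mul]
    congr 1
    field_simp
    linear_combination -8 * norm_sub_sq_add_norm_sub_sq_eq_midpoint a b z
  rw [← Real.sqrt_sq (mul_nonneg (exp_pos _).le
    (isotropicGaussianPDF_nonneg hv.le (midpoint ℝ a b) z))]
  unfold isotropicGaussianPDF
  congr 1
  linear_combination ((2 * π * v) ^ (-(Module.finrank ℝ V : ℝ) / 2)) ^ 2 * hexp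

variable [FiniteDimensional ℝ V] [MeasurableSpace V] [BorelSpace V]

theorem integral_isotropicGaussianPDF (hv : 0 < v) (m : V) :
    ∫ z, isotropicGaussianPDF v m z = 1 := by
  have hexponent (z : V) : -‖z‖ ^ 2 / (2 * v) = -(2 * v)⁻¹ * ‖z‖ ^ 2 := by ring
  unfold isotropicGaussianPDF
  rw [integral_const_mul, integral_sub_right_eq_self (fun z : V ↦ exp (-‖z‖ ^ 2 / (2 * v))) m]
  simp only [hexponent]
  rw [GaussianFourier.integral_rexp_neg_mul_sq_norm (by positivity), div_inv_eq_mul,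
    show π * (2 * v) = 2 * π * v by ring, ← Real.rpow_add (by positivity), neg_div,
    neg_add_cancel, Real.rpow_zero]

theorem integral_sqrt_isotropicGaussianPDF_mul (hv : 0 < v) (a b : V) :
    ∫ z, √(isotropicGaussianPDF v a z * isotropicGaussianPDF v b z)
      = exp (-‖a - b‖ ^ 2 / (8 * v)) := by
  simp only [sqrt_isotropicGaussianPDF_mul hv, integral_const_mul,
    integral_isotropicGaussianPDF hv, mul_one]

/-- The Gaussian measure on `V` with mean `m` and covariance `v • id`, for a variance `v > 0`. It is
defined by its density, so that it has the same form as `eulerKernel`. -/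
def isotropicGaussian (v : ℝ) (m : V) : Measure V :=
  volume.withDensity fun z ↦ ENNReal.ofReal (isotropicGaussianPDF v m z)

theorem tvDist_isotropicGaussian_le (hv : 0 < v) (a b : V) :
    tvDist (isotropicGaussian v a) (isotropicGaussian v b) ≤ ‖a - b‖ / √v := by
  have hnonneg (m : V) : 0 ≤ᵐ[volume] isotropicGaussianPDF v m :=
    .of_forall (isotropicGaussianPDF_nonneg hv.le m)
  calc tvDist (isotropicGaussian v a) (isotropicGaussian v b)
      ≤ 2 * √(1 - exp (-‖a - b‖ ^ 2 / (8 * v)) ^ 2) := by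
        rw [← integral_sqrt_isotropicGaussianPDF_mul hv]
        exact tvDist_withDensity_le_two_mul_sqrt (hnonneg a) (hnonneg b)
          (integral_isotropicGaussianPDF hv a) (integral_isotropicGaussianPDF hv b)
    _ = 2 * √(1 - exp (-(‖a - b‖ ^ 2 / (4 * v)))) := by
        rw [← exp_nat_mul]
        ring_nf
    _ ≤ 2 * √((‖a - b‖ / 2) ^ 2 / v) := by
        gcongr
        calc 1 - exp (-(‖a - b‖ ^ 2 / (4 * v))) ≤ ‖a - b‖ ^ 2 / (4 * v) := by
              linarith [one_sub_le_exp_neg (‖a - b‖ ^ 2 / (4 * v))]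
          _ = (‖a - b‖ / 2) ^ 2 / v := by ring
    _ = ‖a - b‖ / √v := by
        rw [Real.sqrt_div (sq_nonneg _), Real.sqrt_sq (by positivity)]
        ring

end Gaussian

theorem eulerKernel_eq_isotropicGaussian (n : ℕ) (β h : ℝ) (U : Euc n → ℝ) (x : Euc n) :
    eulerKernel n β h U x = isotropicGaussian (2 * β⁻¹ * h) (x - h • gradient U x) := by
  have hnormalization : 4 * π * β⁻¹ * h = 2 * π * (2 * β⁻¹ * h) := by ring
  have hvariance : 4 * β⁻¹ * h = 2 * (2 * β⁻¹ * h) := by ring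
  simp only [eulerKernel, isotropicGaussian, eulerDensity, isotropicGaussianPDF,
    finrank_euclideanSpace_fin, hnormalization, hvariance, sub_add]

theorem euler_kernel_tv_lipschitz_general {n : ℕ} {β h : ℝ} (hβ : 0 < β) (hh : 0 < h)
    {U : Euc n → ℝ} {x y gx gy : Euc n} (hx : HasGradientAt U gx x) (hy : HasGradientAt U gy y) :
    tvDist (eulerKernel n β h U x) (eulerKernel n β h U y)
      ≤ ‖x - y‖ / √(2 * β⁻¹ * h) + √(h / (2 * β⁻¹)) * ‖gx - gy‖ := by
  have hmean : ‖(x - h • gx) - (y - h • gy)‖ ≤ ‖x - y‖ + h * ‖gx - gy‖ := by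
    rw [sub_sub_sub_comm, ← smul_sub, ← norm_smul_of_nonneg hh.le]
    exact norm_sub_le _ _
  have hcoeff : √(h / (2 * β⁻¹)) = h / √(2 * β⁻¹ * h) := by
    rw [← mul_div_mul_right h (2 * β⁻¹) hh.ne', Real.sqrt_div (by positivity),
      Real.sqrt_mul_self hh.le]
  calc tvDist (eulerKernel n β h U x) (eulerKernel n β h U y)
      = tvDist (isotropicGaussian (2 * β⁻¹ * h) (x - h • gx))
          (isotropicGaussian (2 * β⁻¹ * h) (y - h • gy)) := by
        simp only [eulerKernel_eq_isotropicGaussian, hx.gradient, hy.gradient]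
    _ ≤ ‖(x - h • gx) - (y - h • gy)‖ / √(2 * β⁻¹ * h) :=
        tvDist_isotropicGaussian_le (by positivity) _ _
    _ ≤ (‖x - y‖ + h * ‖gx - gy‖) / √(2 * β⁻¹ * h) := by gcongr
    _ = ‖x - y‖ / √(2 * β⁻¹ * h) + √(h / (2 * β⁻¹)) * ‖gx - gy‖ := by
        rw [hcoeff]
        ring

/-- Local Lipschitz continuity of the forward Euler kernel in total variation. -/
theorem euler_kernel_tv_lipschitz (n : ℕ) (β : ℝ) (hβ : 0 < β)
    (U : Euc n → ℝ) (hU : ContDiff ℝ 1 U) (h : ℝ) (hh : 0 < h) (x y : Euc n) :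
    tvDist (eulerKernel n β h U x) (eulerKernel n β h U y)
      ≤ ‖x - y‖ / Real.sqrt (2 * β⁻¹ * h)
        + Real.sqrt (h / (2 * β⁻¹)) * ‖gradient U x - gradient U y‖ := by
  have hdiff : Differentiable ℝ U := hU.differentiable one_ne_zero
  exact euler_kernel_tv_lipschitz_general hβ hh (hdiff x).hasGradientAt (hdiff y).hasGradientAt

end
end

section
/- (Average rejection probability of MALA.) Let U satisfy Assumption 1. For every p ∈ ℕ there exist h_c > 0 and C > 0 such that for every stepsize h < h_c and every x ∈ ℝ^n with U(x) < h^{−1/2}, the expectation over a standard Gaussian random vector ξ ∼ N(0, I) on ℝ^n satisfies E[ |1 − α_h(x, x − h∇U(x) + √(2β⁻¹h)·ξ)|^p ] ≤ C·U(x)^{2p}·h^{3p/2}. -/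
open MeasureTheory Real Filter
open scoped ENNReal

noncomputable section

/-!
Expanding the squares in the two Euler densities gives `α_h(x, y) = 1 ∧ exp (-β Δ)`, where `Δ` is
the trapezoidal-rule error of `U y - U x = ∫ ∇U` along `[x, y]` plus
`h / 4 * (|∇U y|² - |∇U x|²)`. For a displacement of size `√h` both terms are of order
`h ^ (3 / 2)`: the first is cubic in `y - x` with third derivatives of `U`, and the second is `h`
times a Lipschitz difference. Since `|∇U| ≤ K U`, Grönwall's inequality bounds `U` along `[x, y]` by
`U x * exp (K * |y - x|)`, so the derivatives cost at most `U x ^ 2` and an exponential in `|ξ|`,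
all of whose Gaussian moments are finite. The condition `U x < h ^ (-1 / 2)` is what keeps the drift
`h ∇U x` of order `√h`.
-/

section LineDerivatives

variable {E F : Type*} [NormedAddCommGroup E] [NormedSpace ℝ E]
  [NormedAddCommGroup F] [NormedSpace ℝ F]

lemma iteratedDeriv_comp_add_smul {k : ℕ} {f : E → F} (hf : ContDiff ℝ k f) (x v : E) (t : ℝ) :
    iteratedDeriv k (fun s : ℝ ↦ f (x + s • v)) t =
      iteratedFDeriv ℝ k f (x + t • v) (fun _ ↦ v) := by
  induction k generalizing t with
  | zero => simp
  | succ k ih =>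
    have hline : HasDerivAt (fun s : ℝ ↦ x + s • v) v t := by
      simpa using ((hasDerivAt_id t).smul_const v).const_add x
    have hDk : DifferentiableAt ℝ (iteratedFDeriv ℝ k f) (x + t • v) :=
      hf.differentiable_iteratedFDeriv (by exact_mod_cast k.lt_succ_self) _
    have happly := (ContinuousMultilinearMap.apply ℝ (fun _ : Fin k ↦ E) F
      (fun _ ↦ v)).hasFDerivAt.comp_hasDerivAt t (hDk.hasFDerivAt.comp_hasDerivAt t hline)
    rw [iteratedDeriv_succ, funext (ih (hf.of_le (by exact_mod_cast k.le_succ))),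
      iteratedFDeriv_succ_apply_left]
    exact happly.deriv

lemma norm_iteratedDeriv_comp_add_smul_le {k : ℕ} {f : E → F} (hf : ContDiff ℝ k f) (x v : E)
    (t : ℝ) :
    ‖iteratedDeriv k (fun s : ℝ ↦ f (x + s • v)) t‖ ≤
      ‖iteratedFDeriv ℝ k f (x + t • v)‖ * ‖v‖ ^ k := by
  rw [iteratedDeriv_comp_add_smul hf]
  simpa using (iteratedFDeriv ℝ k f (x + t • v)).le_opNorm (fun _ ↦ v)

lemma norm_add_le_mul_exp_of_norm_fderiv_le {f : E → F} (hf : Differentiable ℝ f) {K : ℝ}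
    (hK : ∀ x, ‖fderiv ℝ f x‖ ≤ K * ‖f x‖) (x v : E) :
    ‖f (x + v)‖ ≤ ‖f x‖ * exp (K * ‖v‖) := by
  have hline (t : ℝ) :
      HasDerivAt (fun s : ℝ ↦ f (x + s • v)) (fderiv ℝ f (x + t • v) v) t :=
    (hf _).hasFDerivAt.comp_hasDerivAt t <| by
      simpa using ((hasDerivAt_id t).smul_const v).const_add x
  have hgrowth (t : ℝ) :
      ‖fderiv ℝ f (x + t • v) v‖ ≤ K * ‖v‖ * ‖f (x + t • v)‖ + 0 := by
    calc ‖fderiv ℝ f (x + t • v) v‖ ≤ K * ‖f (x + t • v)‖ * ‖v‖ :=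
          (fderiv ℝ f _).le_of_opNorm_le (hK _) v
      _ = K * ‖v‖ * ‖f (x + t • v)‖ + 0 := by ring
  have hgronwall := norm_le_gronwallBound_of_norm_deriv_right_le (a := 0) (b := 1)
    (fun t _ ↦ (hline t).continuousAt.continuousWithinAt)
    (fun t _ ↦ (hline t).hasDerivWithinAt) le_rfl (fun t _ ↦ hgrowth t) 1 (by simp)
  simpa [gronwallBound_ε0] using hgronwall

lemma norm_fderiv_sub_fderiv_le_of_segment {f : E → F} (hf : ContDiff ℝ 2 f) {x y : E} {M : ℝ}
    (hM : ∀ z ∈ segment ℝ x y, ‖iteratedFDeriv ℝ 2 f z‖ ≤ M) :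
    ‖fderiv ℝ f y - fderiv ℝ f x‖ ≤ M * ‖y - x‖ := by
  have hdiff : Differentiable ℝ (fderiv ℝ f) :=
    (hf.fderiv_right (m := 1) (by norm_num)).differentiable one_ne_zero
  refine (convex_segment x y).norm_image_sub_le_of_norm_fderiv_le (𝕜 := ℝ)
    (fun z _ ↦ hdiff z) (fun z hz ↦ ?_) (left_mem_segment ℝ x y) (right_mem_segment ℝ x y)
  rw [← norm_iteratedFDeriv_one, norm_iteratedFDeriv_fderiv]
  exact hM z hz

variable {U : E → ℝ} {K : ℝ}

lemma nonneg_of_norm_iteratedFDeriv_le_mul (hU₁ : ∀ x, 1 ≤ U x) {k : ℕ}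
    (hK : ∀ x, ‖iteratedFDeriv ℝ k U x‖ ≤ K * U x) : 0 ≤ K :=
  nonneg_of_mul_nonneg_left ((norm_nonneg _).trans (hK 0)) (zero_lt_one.trans_le (hU₁ 0))

lemma norm_iteratedFDeriv_le_of_mem_segment (hU : ContDiff ℝ 1 U) (hU₁ : ∀ x, 1 ≤ U x)
    (hK₁ : ∀ x, ‖iteratedFDeriv ℝ 1 U x‖ ≤ K * U x) {k : ℕ}
    (hK : ∀ x, ‖iteratedFDeriv ℝ k U x‖ ≤ K * U x) {L : ℝ} {x y z : E} (hxy : ‖y - x‖ ≤ L)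
    (hz : z ∈ segment ℝ x y) : ‖iteratedFDeriv ℝ k U z‖ ≤ K * (U x * exp (K * L)) := by
  have hK₀ : 0 ≤ K := nonneg_of_norm_iteratedFDeriv_le_mul hU₁ hK
  have hU_norm (w : E) : ‖U w‖ = U w := norm_of_nonneg (zero_le_one.trans (hU₁ w))
  have hgrowth := norm_add_le_mul_exp_of_norm_fderiv_le (hU.differentiable one_ne_zero)
    (fun w ↦ by simpa [hU_norm] using hK₁ w) x (z - x)
  rw [add_sub_cancel, hU_norm, hU_norm] at hgrowth
  have hUx := hU₁ x
  calc ‖iteratedFDeriv ℝ k U z‖ ≤ K * U z := hK z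
    _ ≤ K * (U x * exp (K * ‖z - x‖)) := by gcongr
    _ ≤ K * (U x * exp (K * L)) := by
        gcongr
        exact (norm_sub_le_of_mem_segment hz).trans hxy

end LineDerivatives

section Trapezoid

open scoped Interval

lemma abs_sub_sub_trapezoid_le {φ : ℝ → ℝ} (hφ : ContDiff ℝ 3 φ) {a b M : ℝ}
    (hM : ∀ t ∈ [[a, b]], |iteratedDeriv 3 φ t| ≤ M) :
    |φ b - φ a - (b - a) / 2 * (deriv φ a + deriv φ b)| ≤ |b - a| ^ 3 * M / 12 := by
  rcases eq_or_ne a b with rfl | hab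
  · simp
  have hφ' : ContDiff ℝ 2 (deriv φ) := hφ.deriv'
  have hM₀ : 0 ≤ M := (abs_nonneg _).trans (hM a Set.left_mem_uIcc)
  have hbound (t : ℝ) : |iteratedDerivWithin 2 (deriv φ) [[a, b]] t| ≤ M := by
    by_cases ht : t ∈ [[a, b]]
    · rw [iteratedDerivWithin_eq_iteratedDeriv (uniqueDiffOn_uIcc hab) hφ'.contDiffAt ht,
        ← iteratedDeriv_succ']
      exact hM t ht
    · rw [iteratedDerivWithin_succ, derivWithin_zero_of_notMem_closure
        (by rwa [isCompact_uIcc.isClosed.closure_eq]), abs_zero]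
      exact hM₀
  have hint : ∫ t in a..b, deriv φ t = φ b - φ a :=
    intervalIntegral.integral_deriv_eq_sub (fun t _ ↦ hφ.differentiable (by norm_num) t)
      (hφ'.continuous.intervalIntegrable a b)
  have herr := trapezoidal_error_le_of_c2 hφ'.contDiffOn hbound one_pos
  rw [trapezoidal_error, trapezoidal_integral_one, hint, abs_sub_comm] at herr
  simpa using herr

variable {E : Type*} [NormedAddCommGroup E] [NormedSpace ℝ E]

lemma abs_sub_sub_half_fderiv_add_fderiv_le {f : E → ℝ} (hf : ContDiff ℝ 3 f) {x y : E} {M : ℝ}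
    (hM : ∀ z ∈ segment ℝ x y, ‖iteratedFDeriv ℝ 3 f z‖ ≤ M) :
    |f y - f x - (fderiv ℝ f x (y - x) + fderiv ℝ f y (y - x)) / 2| ≤
      M * ‖y - x‖ ^ 3 / 12 := by
  set φ : ℝ → ℝ := fun t ↦ f (x + t • (y - x))
  have hφ : ContDiff ℝ 3 φ := by fun_prop
  have hderiv (t : ℝ) : deriv φ t = fderiv ℝ f (x + t • (y - x)) (y - x) := by
    rw [← iteratedDeriv_one, iteratedDeriv_comp_add_smul (hf.of_le (by norm_num)),
      iteratedFDeriv_one_apply]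
  have hφM : ∀ t ∈ [[(0 : ℝ), 1]], |iteratedDeriv 3 φ t| ≤ M * ‖y - x‖ ^ 3 := by
    intro t ht
    have hz : x + t • (y - x) ∈ segment ℝ x y := by
      rw [segment_eq_image']
      exact ⟨t, by rwa [← Set.uIcc_of_le zero_le_one], rfl⟩
    refine (norm_iteratedDeriv_comp_add_smul_le hf x (y - x) t).trans ?_
    gcongr
    exact hM _ hz
  have htrap := abs_sub_sub_trapezoid_le hφ hφM
  rw [hderiv, hderiv] at htrap
  simp only [φ, zero_smul, one_smul, add_zero, add_sub_cancel, sub_zero, abs_one, one_pow,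
    one_mul] at htrap
  convert htrap using 3
  ring

end Trapezoid

section EnergyError

variable {E : Type*} [NormedAddCommGroup E] [InnerProductSpace ℝ E] [CompleteSpace E]

lemma norm_gradient_eq_norm_iteratedFDeriv_one (f : E → ℝ) (x : E) :
    ‖gradient f x‖ = ‖iteratedFDeriv ℝ 1 f x‖ := by
  simp [gradient]

/-- The energy error of the Euler proposal `y` from `x` at stepsize `h`: the quantity `Δ` for which
the Metropolis–Hastings ratio of the chain targeting `exp (-β U)` equals `exp (-β Δ)`, at every
inverse temperature `β`. It is the error of the trapezoidal rule for the line integral of `∇U` from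
`x` to `y`, plus a correction from the two drift terms. -/
def energyError (h : ℝ) (U : E → ℝ) (x y : E) : ℝ :=
  U y - U x - (inner ℝ (gradient U x) (y - x) + inner ℝ (gradient U y) (y - x)) / 2 +
    h / 4 * (‖gradient U y‖ ^ 2 - ‖gradient U x‖ ^ 2)

lemma abs_energyError_le_of_segment {U : E → ℝ} (hU : ContDiff ℝ 3 U) {h : ℝ} (hh : 0 ≤ h)
    {x y : E} {M : ℝ}
    (hM : ∀ k ∈ Finset.Icc 1 3, ∀ z ∈ segment ℝ x y, ‖iteratedFDeriv ℝ k U z‖ ≤ M) :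
    |energyError h U x y| ≤ M * ‖y - x‖ ^ 3 / 12 + h / 2 * (M ^ 2 * ‖y - x‖) := by
  have hgrad : ∀ z ∈ segment ℝ x y, ‖gradient U z‖ ≤ M := fun z hz ↦
    (norm_gradient_eq_norm_iteratedFDeriv_one U z).trans_le (hM 1 (by simp) z hz)
  have hx := hgrad x (left_mem_segment ℝ x y)
  have hy := hgrad y (right_mem_segment ℝ x y)
  have hM₀ : 0 ≤ M := (norm_nonneg _).trans hx
  have htrap : |U y - U x -
      (inner ℝ (gradient U x) (y - x) + inner ℝ (gradient U y) (y - x)) / 2| ≤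
      M * ‖y - x‖ ^ 3 / 12 := by
    simp only [inner_gradient_left]
    exact abs_sub_sub_half_fderiv_add_fderiv_le hU (hM 3 (by simp))
  have hlip : ‖gradient U y - gradient U x‖ ≤ M * ‖y - x‖ := by
    rw [gradient, gradient, ← map_sub, LinearIsometryEquiv.norm_map]
    exact norm_fderiv_sub_fderiv_le_of_segment (hU.of_le (by norm_num)) (hM 2 (by simp))
  have hsq : |‖gradient U y‖ ^ 2 - ‖gradient U x‖ ^ 2| ≤ 2 * M * (M * ‖y - x‖) := by
    rw [sq_sub_sq, abs_mul, abs_of_nonneg (by positivity)]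
    gcongr
    · linarith
    · exact (abs_norm_sub_norm_le _ _).trans hlip
  calc |energyError h U x y|
      ≤ M * ‖y - x‖ ^ 3 / 12 + h / 4 * (2 * M * (M * ‖y - x‖)) := by
        refine (abs_add_le _ _).trans (add_le_add htrap ?_)
        rw [abs_mul, abs_of_nonneg (by positivity)]
        gcongr
    _ = M * ‖y - x‖ ^ 3 / 12 + h / 2 * (M ^ 2 * ‖y - x‖) := by ring

lemma abs_energyError_le_of_norm_iteratedFDeriv_le {U : E → ℝ} (hU : ContDiff ℝ 3 U)
    (hU₁ : ∀ x, 1 ≤ U x) {K : ℝ}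
    (hK : ∀ k ∈ Finset.Icc 1 3, ∀ x, ‖iteratedFDeriv ℝ k U x‖ ≤ K * U x)
    {h : ℝ} (hh : 0 < h) (hh₁ : h ≤ 1) {L : ℝ} {x y : E} (hxy : ‖y - x‖ ≤ √h * L) :
    |energyError h U x y| ≤ U x ^ 2 * √h ^ 3 * ((K + K ^ 2) / 2 * exp ((2 * K + 1) * L)) := by
  have hUx := hU₁ x
  have hs : 0 < √h := sqrt_pos.2 hh
  have hK₀ : 0 ≤ K := nonneg_of_norm_iteratedFDeriv_le_mul hU₁ (hK 1 (by simp))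
  have hL₀ : 0 ≤ L := nonneg_of_mul_nonneg_right ((norm_nonneg _).trans hxy) hs
  have hxyL : ‖y - x‖ ≤ L := hxy.trans (mul_le_of_le_one_left hL₀ (sqrt_le_one.2 hh₁))
  set M := K * (U x * exp (K * L)) with hM
  have : 0 ≤ M := by positivity
  have hM_le : M ≤ K * (U x ^ 2 * exp (K * L) ^ 2) := by
    rw [hM]
    gcongr
    · exact le_self_pow₀ hUx two_ne_zero
    · exact le_self_pow₀ (one_le_exp (by positivity)) two_ne_zero
  have hL_le : L ≤ exp L := by linarith [add_one_le_exp L]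
  have hL_cube_le : L ^ 3 / 6 ≤ exp L := pow_div_factorial_le_exp L hL₀ 3
  calc |energyError h U x y|
      ≤ M * ‖y - x‖ ^ 3 / 12 + h / 2 * (M ^ 2 * ‖y - x‖) :=
        abs_energyError_le_of_segment hU hh.le fun k hk _ hz ↦
          norm_iteratedFDeriv_le_of_mem_segment (hU.of_le (by norm_num)) hU₁ (hK 1 (by simp))
            (hK k hk) hxyL hz
    _ ≤ M * (√h * L) ^ 3 / 12 + h / 2 * (M ^ 2 * (√h * L)) := by gcongr
    _ = √h ^ 3 / 2 * (M * (L ^ 3 / 6) + M ^ 2 * L) := by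
        nth_rw 2 [← sq_sqrt hh.le]
        ring
    _ ≤ √h ^ 3 / 2 * (K * (U x ^ 2 * exp (K * L) ^ 2) * exp L + M ^ 2 * exp L) := by gcongr
    _ = U x ^ 2 * √h ^ 3 * ((K + K ^ 2) / 2 * (exp (K * L) ^ 2 * exp L)) := by
        rw [hM]
        ring
    _ = U x ^ 2 * √h ^ 3 * ((K + K ^ 2) / 2 * exp ((2 * K + 1) * L)) := by
        rw [← exp_nat_mul, ← exp_add]
        congr 3
        push_cast
        ring

end EnergyError

section Acceptance

variable {n : ℕ} {β h : ℝ}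

lemma abs_one_sub_min_one_exp_le (t : ℝ) : |1 - min 1 (exp t)| ≤ |t| := by
  rcases le_total t 0 with ht | ht
  · rw [min_eq_right (exp_le_one_iff.2 ht), abs_of_nonneg (by simpa using ht), abs_of_nonpos ht]
    linarith [add_one_le_exp t]
  · simp [min_eq_left (one_le_exp ht)]

lemma accept_eq_min_one_exp_energyError (hβ : 0 < β) (hh : 0 < h) (U : Euc n → ℝ)
    (x y : Euc n) : accept n β h U x y = min 1 (exp (-β * energyError h U x y)) := by
  have hx : ‖y - x + h • gradient U x‖ ^ 2 =
      ‖y - x‖ ^ 2 + 2 * h * inner ℝ (gradient U x) (y - x) + h ^ 2 * ‖gradient U x‖ ^ 2 := by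
    rw [norm_add_sq_real, real_inner_smul_right, real_inner_comm, norm_smul, mul_pow, norm_eq_abs,
      sq_abs]
    ring
  have hy : ‖x - y + h • gradient U y‖ ^ 2 =
      ‖y - x‖ ^ 2 - 2 * h * inner ℝ (gradient U y) (y - x) + h ^ 2 * ‖gradient U y‖ ^ 2 := by
    rw [← neg_sub y x, norm_add_sq_real, inner_neg_left, real_inner_smul_right, real_inner_comm,
      norm_neg, norm_smul, mul_pow, norm_eq_abs, sq_abs]
    ring
  have hZ : (4 * π * β⁻¹ * h) ^ (-(n : ℝ) / 2) ≠ 0 := by positivity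
  rw [accept, eulerDensity, eulerDensity, mul_assoc (_ ^ _), mul_assoc (_ ^ _),
    mul_div_mul_left _ _ hZ, ← exp_add, ← exp_add, ← exp_sub, hx, hy, energyError]
  congr 2
  field_simp
  ring

lemma abs_one_sub_accept_le (hβ : 0 < β) (hh : 0 < h) (U : Euc n → ℝ) (x y : Euc n) :
    |1 - accept n β h U x y| ≤ β * |energyError h U x y| := by
  rw [accept_eq_min_one_exp_energyError hβ hh]
  refine (abs_one_sub_min_one_exp_le _).trans_eq ?_
  rw [abs_mul, abs_neg, abs_of_pos hβ]

lemma norm_neg_smul_add_sqrt_smul_le {E : Type*} [NormedAddCommGroup E] [NormedSpace ℝ E]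
    (hh : 0 ≤ h) {K : ℝ} {g : E} (hg : √h * ‖g‖ ≤ K) (c : ℝ) (ξ : E) :
    ‖-(h • g) + √(c * h) • ξ‖ ≤ √h * (K + √c * ‖ξ‖) := by
  calc ‖-(h • g) + √(c * h) • ξ‖ ≤ ‖-(h • g)‖ + ‖√(c * h) • ξ‖ := norm_add_le _ _
    _ = √h * (√h * ‖g‖) + √h * (√c * ‖ξ‖) := by
        rw [norm_neg, norm_smul, norm_smul, norm_of_nonneg hh, norm_of_nonneg (sqrt_nonneg _),
          sqrt_mul' c hh, ← mul_assoc, mul_self_sqrt hh]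
        ring
    _ ≤ √h * (K + √c * ‖ξ‖) := by
        rw [mul_add]
        gcongr

lemma abs_one_sub_accept_proposal_le (hβ : 0 < β) {U : Euc n → ℝ} (hU : ContDiff ℝ 3 U)
    (hU₁ : ∀ x, 1 ≤ U x) {K : ℝ}
    (hK : ∀ k ∈ Finset.Icc 1 3, ∀ x, ‖iteratedFDeriv ℝ k U x‖ ≤ K * U x)
    (hh : 0 < h) {x : Euc n} (hx : √h * U x ≤ 1) (ξ : Euc n) :
    |1 - accept n β h U x (x - h • gradient U x + √(2 * β⁻¹ * h) • ξ)| ≤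
      U x ^ 2 * √h ^ 3 *
        (β * ((K + K ^ 2) / 2 * exp ((2 * K + 1) * (K + √(2 * β⁻¹) * ‖ξ‖)))) := by
  have hUx := hU₁ x
  have hK₀ : 0 ≤ K := nonneg_of_norm_iteratedFDeriv_le_mul hU₁ (hK 1 (by simp))
  have hh₁ : h ≤ 1 :=
    sqrt_le_one.1 ((le_mul_of_one_le_right (sqrt_nonneg h) hUx).trans hx)
  have hgrad : √h * ‖gradient U x‖ ≤ K := by
    have hDU : ‖gradient U x‖ ≤ K * U x :=
      (norm_gradient_eq_norm_iteratedFDeriv_one U x).trans_le (hK 1 (by simp) x)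
    calc √h * ‖gradient U x‖ ≤ √h * (K * U x) := by gcongr
      _ = K * (√h * U x) := by ring
      _ ≤ K := mul_le_of_le_one_right hK₀ hx
  set y := x - h • gradient U x + √(2 * β⁻¹ * h) • ξ with hy
  have hxy : ‖y - x‖ ≤ √h * (K + √(2 * β⁻¹) * ‖ξ‖) := by
    rw [show y - x = -(h • gradient U x) + √(2 * β⁻¹ * h) • ξ by rw [hy]; abel]
    exact norm_neg_smul_add_sqrt_smul_le hh.le hgrad _ ξ
  calc |1 - accept n β h U x y| ≤ β * |energyError h U x y| := abs_one_sub_accept_le hβ hh U x y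
    _ ≤ β * (U x ^ 2 * √h ^ 3 *
          ((K + K ^ 2) / 2 * exp ((2 * K + 1) * (K + √(2 * β⁻¹) * ‖ξ‖)))) := by
        gcongr
        exact abs_energyError_le_of_norm_iteratedFDeriv_le hU hU₁ hK hh hh₁ hxy
    _ = _ := by ring

end Acceptance

section GaussianMoments

lemma integrable_exp_neg_mul_sq_norm_add_mul_norm {V : Type*} [NormedAddCommGroup V]
    [InnerProductSpace ℝ V] [FiniteDimensional ℝ V] [MeasurableSpace V] [BorelSpace V]
    {b : ℝ} (hb : 0 < b) (c : ℝ) :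
    Integrable (fun v : V ↦ exp (-b * ‖v‖ ^ 2 + c * ‖v‖)) := by
  have hgauss : Integrable (fun v : V ↦ exp (-(b / 2) * ‖v‖ ^ 2)) :=
    .of_integral_ne_zero <| by
      rw [GaussianFourier.integral_rexp_neg_mul_sq_norm (half_pos hb)]
      positivity
  refine (hgauss.const_mul (exp (c ^ 2 / (2 * b)))).mono' (by fun_prop) (.of_forall fun v ↦ ?_)
  rw [norm_of_nonneg (exp_pos _).le, ← exp_add, exp_le_exp]
  have hsq : 0 ≤ (b * ‖v‖ - c) ^ 2 / (2 * b) := by positivity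
  have hexpand : (b * ‖v‖ - c) ^ 2 / (2 * b) = b / 2 * ‖v‖ ^ 2 - c * ‖v‖ + c ^ 2 / (2 * b) := by
    field_simp
    ring
  linarith

lemma integrable_exp_mul_norm_stdGaussian (n : ℕ) (c : ℝ) :
    Integrable (fun ξ : Euc n ↦ exp (c * ‖ξ‖)) (stdGaussian n) := by
  rw [stdGaussian, integrable_withDensity_iff (by fun_prop) (by simp)]
  refine ((integrable_exp_neg_mul_sq_norm_add_mul_norm (V := Euc n) one_half_pos c).const_mul
    ((2 * π) ^ (-(n : ℝ) / 2))).congr (.of_forall fun ξ ↦ ?_)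
  beta_reduce
  rw [ENNReal.toReal_ofReal (by positivity), exp_add]
  ring_nf

lemma integral_abs_pow_stdGaussian_le {n : ℕ} {f : Euc n → ℝ} {a c : ℝ}
    (hf : ∀ ξ, |f ξ| ≤ a * exp (c * ‖ξ‖)) (p : ℕ) :
    ∫ ξ, |f ξ| ^ p ∂stdGaussian n ≤ a ^ p * ∫ ξ, exp (p * c * ‖ξ‖) ∂stdGaussian n := by
  rw [← integral_const_mul]
  refine integral_mono_of_nonneg (.of_forall fun ξ ↦ by positivity)
    ((integrable_exp_mul_norm_stdGaussian n _).const_mul _) (.of_forall fun ξ ↦ ?_)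
  calc |f ξ| ^ p ≤ (a * exp (c * ‖ξ‖)) ^ p := by
        gcongr
        exact hf ξ
    _ = a ^ p * exp (p * c * ‖ξ‖) := by rw [mul_pow, ← exp_nat_mul, mul_assoc (p : ℝ)]

end GaussianMoments

lemma Assumption1.exists_norm_iteratedFDeriv_le {n : ℕ} {β : ℝ} {U : Euc n → ℝ}
    (hU : Assumption1 n β U) :
    ∃ K, ∀ k ∈ Finset.Icc 1 3, ∀ x, ‖iteratedFDeriv ℝ k U x‖ ≤ K * U x := by
  obtain ⟨K, -, hK⟩ := hU.deriv_bound
  simp only [sup_le_iff] at hK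
  refine ⟨K, fun k hk x ↦ ?_⟩
  obtain ⟨⟨⟨-, hD3⟩, hD2⟩, hD1⟩ := hK x
  fin_cases hk
  · simpa [gradient] using hD1
  · exact hD2
  · exact hD3

theorem mala_rejection_probability_general {n : ℕ} {β : ℝ} (hβ : 0 < β) {U : Euc n → ℝ}
    (hU : ContDiff ℝ 3 U) (hU₁ : ∀ x, 1 ≤ U x) {K : ℝ}
    (hK : ∀ k ∈ Finset.Icc 1 3, ∀ x, ‖iteratedFDeriv ℝ k U x‖ ≤ K * U x) (p : ℕ) :
    ∃ C > (0 : ℝ), ∀ h : ℝ, 0 < h → ∀ x : Euc n, U x < h ^ (-(1 : ℝ) / 2) →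
      ∫ ξ, |1 - accept n β h U x (x - h • gradient U x + √(2 * β⁻¹ * h) • ξ)| ^ p
          ∂stdGaussian n ≤
        C * U x ^ (2 * p) * h ^ (3 * (p : ℝ) / 2) := by
  set c := (2 * K + 1) * √(2 * β⁻¹) with hc
  set A := β * ((K + K ^ 2) / 2 * exp ((2 * K + 1) * K)) with hA
  set I := ∫ ξ, exp (p * c * ‖ξ‖) ∂stdGaussian n
  refine ⟨|A ^ p * I| + 1, by positivity, fun h hh x hx ↦ ?_⟩
  have hsx : √h * U x ≤ 1 := by
    rw [rpow_div_two_eq_sqrt _ hh.le, rpow_neg_one, ← one_div, lt_div_iff₀' (sqrt_pos.2 hh)] at hx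
    exact hx.le
  have hpow : h ^ (3 * (p : ℝ) / 2) = √h ^ (3 * p) := by
    rw [rpow_div_two_eq_sqrt _ hh.le]
    exact_mod_cast rpow_natCast (√h) (3 * p)
  have hpointwise (ξ : Euc n) :
      |1 - accept n β h U x (x - h • gradient U x + √(2 * β⁻¹ * h) • ξ)| ≤
        U x ^ 2 * √h ^ 3 * A * exp (c * ‖ξ‖) := by
    refine (abs_one_sub_accept_proposal_le hβ hU hU₁ hK hh hsx ξ).trans_eq ?_
    rw [mul_add (2 * K + 1), exp_add, hA, hc]
    ring_nf
  calc _ ≤ (U x ^ 2 * √h ^ 3 * A) ^ p * I := integral_abs_pow_stdGaussian_le hpointwise p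
    _ = A ^ p * I * (U x ^ (2 * p) * √h ^ (3 * p)) := by
        rw [mul_pow, mul_pow, ← pow_mul, ← pow_mul]
        ring
    _ ≤ (|A ^ p * I| + 1) * (U x ^ (2 * p) * √h ^ (3 * p)) := by
        have hUx := hU₁ x
        gcongr
        linarith [le_abs_self (A ^ p * I)]
    _ = _ := by rw [hpow, mul_assoc]

/-- Average rejection probability of MALA. -/
theorem mala_rejection_probability (n : ℕ) (β : ℝ) (hβ : 0 < β)
    (U : Euc n → ℝ) (hU : Assumption1 n β U) (p : ℕ) :
    ∃ hc > (0:ℝ), ∃ C > (0:ℝ), ∀ h : ℝ, 0 < h → h < hc →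
      ∀ x : Euc n, U x < h ^ (-(1:ℝ)/2) →
        (∫ ξ, |1 - accept n β h U x
            (x - h • gradient U x + Real.sqrt (2 * β⁻¹ * h) • ξ)| ^ p ∂(stdGaussian n))
          ≤ C * U x ^ (2 * p) * h ^ ((3 * (p:ℝ)) / 2) := by
  obtain ⟨K, hK⟩ := hU.exists_norm_iteratedFDeriv_le
  obtain ⟨C, hC, hbound⟩ :=
    mala_rejection_probability_general hβ (hU.smooth.of_le (by norm_num)) hU.one_le hK p
  exact ⟨1, one_pos, C, hC, fun h hh _ ↦ hbound h hh⟩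

end
end
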